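/- arXiv:1503.04048 — 12 statements merged into one kernel-verified Lean document; each statement's English description precedes it below -/
import Mathlib

section
/- Let D=(V,A) be a digraph. Then the secure domination number of the underlying undirected graph and the out-domination number of D are both at most the out-secure domination number and the secure out-domination number of D; and both the out-secure domination number and the secure out-domination number of D are at most the out-secure out-domination number and the in-secure out-domination number of D. That is: γ_s(G) ≤ γ_os(D), γ_s(G) ≤ γ_so(D), γ⁺(D) ≤ γ_os(D), γ⁺(D) ≤ γ_so(D), γ_os(D) ≤ γ_oso(D), γ_so(D) ≤ γ_oso(D), and γ_so(D) ≤ γ_iso(D). Moreover, if D has no symmetric arcs (no pair of opposite arcs), then also γ_os(D) ≤ γ_iso(D). -/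
/-!
Each parameter is a minimum over vertex sets with some property, so an inequality between two
parameters follows once every set with the second property also has the first
(`gamma_le_of_imp`; the whole vertex set has every property, so no minimum is vacuous).
Most of these implications hold because out-domination implies domination in the underlying graph
and a defender on a prescribed side of an arc is in particular a neighbor. An OSDS is
out-dominating because the defender of `v` is an in-neighbor of `v`.

The last inequality uses the absence of symmetric arcs. In an ISODS `S` every outside vertex has an
in-neighbor and an out-neighbor in `S`, and these are distinct. Hence it keeps a neighbor in `S`
after any one vertex leaves, so any in-neighbor in `S` of `v` can serve as its defender
(`ISODS.osds`).
-/

open Finset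

variable {V : Type*}

/-- `S` is an out-dominating set of the digraph with arc relation `A`. -/
def OutDom (A : V → V → Prop) (S : Finset V) : Prop :=
  ∀ v : V, v ∉ S → ∃ u ∈ S, A u v

/-- `S` is an in-dominating set. -/
def InDom (A : V → V → Prop) (S : Finset V) : Prop :=
  ∀ v : V, v ∉ S → ∃ u ∈ S, A v u

/-- `S` is a dominating set of the underlying undirected graph of the digraph `A`. -/
def DomG (A : V → V → Prop) (S : Finset V) : Prop :=
  ∀ v : V, v ∉ S → ∃ u ∈ S, A u v ∨ A v u

/-- Secure dominating set of the underlying undirected graph. -/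
def SDS [DecidableEq V] (A : V → V → Prop) (S : Finset V) : Prop :=
  DomG A S ∧ ∀ v : V, v ∉ S → ∃ u ∈ S, (A u v ∨ A v u) ∧ DomG A (insert v (S.erase u))

/-- Out-secure dominating set (OSDS). -/
def OSDS [DecidableEq V] (A : V → V → Prop) (S : Finset V) : Prop :=
  DomG A S ∧ ∀ v : V, v ∉ S → ∃ u ∈ S, A u v ∧ DomG A (insert v (S.erase u))

/-- Secure out-dominating set (SODS). -/
def SODS [DecidableEq V] (A : V → V → Prop) (S : Finset V) : Prop :=
  OutDom A S ∧ ∀ v : V, v ∉ S → ∃ u ∈ S, (A v u ∨ A u v) ∧ OutDom A (insert v (S.erase u))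

/-- Out-secure out-dominating set (OSODS). -/
def OSODS [DecidableEq V] (A : V → V → Prop) (S : Finset V) : Prop :=
  OutDom A S ∧ ∀ v : V, v ∉ S → ∃ u ∈ S, A u v ∧ OutDom A (insert v (S.erase u))

/-- In-secure out-dominating set (ISODS). -/
def ISODS [DecidableEq V] (A : V → V → Prop) (S : Finset V) : Prop :=
  OutDom A S ∧ ∀ v : V, v ∉ S → ∃ u ∈ S, A v u ∧ OutDom A (insert v (S.erase u))

/-- Twin dominating set. -/
def TwinDom (A : V → V → Prop) (S : Finset V) : Prop :=
  ∀ v : V, v ∉ S → (∃ u ∈ S, A v u) ∧ (∃ u ∈ S, A u v)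

/-- The out-domination number `γ⁺`. -/
noncomputable def gammaPlus [Fintype V] (A : V → V → Prop) : ℕ :=
  sInf {k | ∃ S : Finset V, OutDom A S ∧ S.card = k}

/-- The in-domination number `γ⁻`. -/
noncomputable def gammaMinus [Fintype V] (A : V → V → Prop) : ℕ :=
  sInf {k | ∃ S : Finset V, InDom A S ∧ S.card = k}

/-- The secure domination number of the underlying undirected graph, `γ_s`. -/
noncomputable def gammaS [Fintype V] [DecidableEq V] (A : V → V → Prop) : ℕ :=
  sInf {k | ∃ S : Finset V, SDS A S ∧ S.card = k}

/-- The out-secure domination number `γ_os`. -/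
noncomputable def gammaOS [Fintype V] [DecidableEq V] (A : V → V → Prop) : ℕ :=
  sInf {k | ∃ S : Finset V, OSDS A S ∧ S.card = k}

/-- The secure out-domination number `γ_so`. -/
noncomputable def gammaSO [Fintype V] [DecidableEq V] (A : V → V → Prop) : ℕ :=
  sInf {k | ∃ S : Finset V, SODS A S ∧ S.card = k}

/-- The out-secure out-domination number `γ_oso`. -/
noncomputable def gammaOSO [Fintype V] [DecidableEq V] (A : V → V → Prop) : ℕ :=
  sInf {k | ∃ S : Finset V, OSODS A S ∧ S.card = k}

/-- The in-secure out-domination number `γ_iso`. -/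
noncomputable def gammaISO [Fintype V] [DecidableEq V] (A : V → V → Prop) : ℕ :=
  sInf {k | ∃ S : Finset V, ISODS A S ∧ S.card = k}

/-- The twin domination number `γ*`. -/
noncomputable def gammaTwin [Fintype V] (A : V → V → Prop) : ℕ :=
  sInf {k | ∃ S : Finset V, TwinDom A S ∧ S.card = k}

/-- Out-degree `d⁺(u)`. -/
noncomputable def outDeg (A : V → V → Prop) (u : V) : ℕ := Nat.card {v | A u v}

/-- In-degree `d⁻(u)`. -/
noncomputable def inDeg (A : V → V → Prop) (u : V) : ℕ := Nat.card {v | A v u}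

/-- Maximum out-degree `Δ⁺`. -/
noncomputable def maxOutDeg [Fintype V] (A : V → V → Prop) : ℕ :=
  Finset.univ.sup fun u => outDeg A u

/-- Minimum out-degree `δ⁺`. -/
noncomputable def minOutDeg (A : V → V → Prop) : ℕ := sInf (Set.range fun u => outDeg A u)

/-- Minimum in-degree `δ⁻`. -/
noncomputable def minInDeg (A : V → V → Prop) : ℕ := sInf (Set.range fun u => inDeg A u)

/-- The set of out-private neighbors `pn⁺(u,S)`: vertices `w` with `N⁻[w] ∩ S = {u}`. -/
def pnPlus (A : V → V → Prop) (S : Finset V) (u : V) : Set V :=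
  {w | {x | A x w ∨ x = w} ∩ ↑S = {u}}

/-- The set of in-private neighbors `pn⁻(u,S)`: vertices `w` with `N⁺[w] ∩ S = {u}`. -/
def pnMinus (A : V → V → Prop) (S : Finset V) (u : V) : Set V :=
  {w | {x | A w x ∨ x = w} ∩ ↑S = {u}}

/-- `A` is an orientation of the simple graph `G`. -/
def IsOrientation (G : SimpleGraph V) (A : V → V → Prop) : Prop :=
  (∀ u v : V, G.Adj u v ↔ (A u v ∨ A v u)) ∧ (∀ u v : V, A u v → ¬ A v u)

/-- The arc relation of the directed path `P_n` on `Fin n`. -/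
def pathArc (n : ℕ) : Fin n → Fin n → Prop := fun i j => (i : ℕ) + 1 = (j : ℕ)

/-- The arc relation of the directed cycle `C_n` on `Fin n`. -/
def cycleArc (n : ℕ) : Fin n → Fin n → Prop := fun i j => ((i : ℕ) + 1) % n = (j : ℕ)

/-- Monotonicity of the minimum cardinality. Nonemptiness of the family `Q` is needed because
`sInf ∅ = 0` in `ℕ`. -/
lemma gamma_le_of_imp {P Q : Finset V → Prop} (hQ : ∃ S, Q S) (h : ∀ S, Q S → P S) :
    sInf {k | ∃ S : Finset V, P S ∧ S.card = k} ≤ sInf {k | ∃ S : Finset V, Q S ∧ S.card = k} := by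
  obtain ⟨S₀, hS₀⟩ := hQ
  obtain ⟨S, hS, hcard⟩ :=
    Nat.sInf_mem (s := {k | ∃ S : Finset V, Q S ∧ S.card = k}) ⟨_, S₀, hS₀, rfl⟩
  exact Nat.sInf_le ⟨S, h S hS, hcard⟩

lemma OutDom.domG {A : V → V → Prop} {S : Finset V} (h : OutDom A S) : DomG A S := fun v hv =>
  let ⟨u, hu, huv⟩ := h v hv
  ⟨u, hu, Or.inl huv⟩

/-- Without symmetric arcs, every in-secure out-dominating set is an out-secure dominating set. -/
lemma ISODS.osds [DecidableEq V] {A : V → V → Prop} {S : Finset V}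
    (hA : ∀ u v : V, A u v → ¬ A v u) (h : ISODS A S) : OSDS A S := by
  refine ⟨h.1.domG, fun v hv => ?_⟩
  obtain ⟨w, hw, hwv⟩ := h.1 v hv
  refine ⟨w, hw, hwv, fun x hx => ?_⟩
  by_cases hxw : x = w
  · subst hxw
    exact ⟨v, mem_insert_self _ _, Or.inr hwv⟩
  have hxS : x ∉ S := fun hxS => hx (mem_insert_of_mem (mem_erase.2 ⟨hxw, hxS⟩))
  obtain ⟨a, ha, hax⟩ := h.1 x hxS
  obtain ⟨b, hb, hxb, -⟩ := h.2 x hxS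
  by_cases haw : a = w
  -- The in-neighbor `a` is the vertex that left, so the out-neighbor `b ≠ a` remains.
  · have hbw : b ≠ w := fun hbw => hA a x hax (by rwa [haw, ← hbw])
    exact ⟨b, mem_insert_of_mem (mem_erase.2 ⟨hbw, hb⟩), Or.inr hxb⟩
  · exact ⟨a, mem_insert_of_mem (mem_erase.2 ⟨haw, ha⟩), Or.inl hax⟩

/-- the inequality chains between the secure domination parameters. -/
theorem stmt_0 [Fintype V] [DecidableEq V] (A : V → V → Prop) (hloop : ∀ v : V, ¬ A v v) :
    gammaS A ≤ gammaOS A ∧ gammaS A ≤ gammaSO A ∧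
    gammaPlus A ≤ gammaOS A ∧ gammaPlus A ≤ gammaSO A ∧
    gammaOS A ≤ gammaOSO A ∧ gammaSO A ≤ gammaOSO A ∧
    gammaSO A ≤ gammaISO A ∧
    ((∀ u v : V, A u v → ¬ A v u) → gammaOS A ≤ gammaISO A) := by
  have hos : OSDS A univ := ⟨fun v hv => absurd (mem_univ v) hv, fun v hv => absurd (mem_univ v) hv⟩
  have hso : SODS A univ := ⟨fun v hv => absurd (mem_univ v) hv, fun v hv => absurd (mem_univ v) hv⟩
  have hoso : OSODS A univ :=
    ⟨fun v hv => absurd (mem_univ v) hv, fun v hv => absurd (mem_univ v) hv⟩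
  have hiso : ISODS A univ :=
    ⟨fun v hv => absurd (mem_univ v) hv, fun v hv => absurd (mem_univ v) hv⟩
  refine ⟨gamma_le_of_imp ⟨_, hos⟩ fun S h => ⟨h.1, fun v hv => ?_⟩,
    gamma_le_of_imp ⟨_, hso⟩ fun S h => ⟨h.1.domG, fun v hv => ?_⟩,
    gamma_le_of_imp ⟨_, hos⟩ fun S h v hv => ?_,
    gamma_le_of_imp ⟨_, hso⟩ fun S h => h.1,
    gamma_le_of_imp ⟨_, hoso⟩ fun S h => ⟨h.1.domG, fun v hv => ?_⟩,
    gamma_le_of_imp ⟨_, hoso⟩ fun S h => ⟨h.1, fun v hv => ?_⟩,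
    gamma_le_of_imp ⟨_, hiso⟩ fun S h => ⟨h.1, fun v hv => ?_⟩,
    fun hA => gamma_le_of_imp ⟨_, hiso⟩ fun S h => h.osds hA⟩
  all_goals obtain ⟨u, hu, huv, hdom⟩ := h.2 v hv
  · exact ⟨u, hu, Or.inl huv, hdom⟩
  · exact ⟨u, hu, huv.symm, hdom.domG⟩
  · exact ⟨u, hu, huv⟩
  · exact ⟨u, hu, huv, hdom.domG⟩
  · exact ⟨u, hu, Or.inr huv, hdom⟩
  · exact ⟨u, hu, Or.inl huv, hdom⟩
end

section
/- For any digraph D of order n, γ_oso(D) ≤ n − δ⁰, where δ⁰ = min{δ⁺, δ⁻} is the minimum of the minimum out-degree and the minimum in-degree of D. -/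
/-!
Put `d = δ⁻`. If `|S| ≥ n - d`, then `S` is out-dominating: a vertex `v ∉ S` without an
in-neighbor in `S` would have all its in-neighbors in `Sᶜ ∖ {v}`, which has fewer than `d`
elements (`outDom_of_card`). Swapping a vertex of `S` for one outside preserves the cardinality,
so every set of at least `n - d` vertices is automatically an OSODS (`osods_of_card`). Since
`δ⁰ ≤ δ⁻`, any set of `n - δ⁰` vertices witnesses the bound.
-/

open Finset

variable {V : Type*}

lemma minInDeg_le_inDeg (A : V → V → Prop) (v : V) : minInDeg A ≤ inDeg A v :=
  Nat.sInf_le ⟨v, rfl⟩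

/-- Sets whose complement has at most `d ≤ δ⁻` elements are out-dominating. -/
lemma outDom_of_card [Fintype V] [DecidableEq V] (A : V → V → Prop) (hloop : ∀ v : V, ¬ A v v)
    {d : ℕ} (hd : d ≤ minInDeg A) {S : Finset V} (hS : Fintype.card V ≤ S.card + d) :
    OutDom A S := by
  classical
  intro v hv
  by_contra! h
  have hsub : {u | A u v} ⊆ (((insert v S)ᶜ : Finset V) : Set V) := by
    intro u hu
    have huv : u ≠ v := by
      rintro rfl
      exact hloop u hu
    have huS : u ∉ S := fun hmem => h u hmem hu
    simp [huv, huS]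
  have hle : inDeg A v ≤ ((insert v S)ᶜ : Finset V).card := by
    have := Set.ncard_le_ncard hsub (Finset.finite_toSet _)
    rwa [Set.ncard_coe_finset] at this
  have hmin := minInDeg_le_inDeg A v
  have hcard : (insert v S).card + ((insert v S)ᶜ : Finset V).card = Fintype.card V :=
    Finset.card_add_card_compl _
  rw [Finset.card_insert_of_notMem hv] at hcard
  omega

lemma osods_of_card [Fintype V] [DecidableEq V] (A : V → V → Prop) (hloop : ∀ v : V, ¬ A v v)
    {d : ℕ} (hd : d ≤ minInDeg A) {S : Finset V} (hS : Fintype.card V ≤ S.card + d) :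
    OSODS A S := by
  have hdom := outDom_of_card A hloop hd hS
  refine ⟨hdom, fun v hv => ?_⟩
  obtain ⟨u, hu, huv⟩ := hdom v hv
  refine ⟨u, hu, huv, outDom_of_card A hloop hd ?_⟩
  have hv' : v ∉ S.erase u := fun hmem => hv (Finset.mem_of_mem_erase hmem)
  rw [Finset.card_insert_of_notMem hv', Finset.card_erase_add_one hu]
  exact hS

/-- `γ_oso(D) ≤ n − δ⁰`. -/
theorem stmt_3 [Fintype V] [DecidableEq V] (A : V → V → Prop) (hloop : ∀ v : V, ¬ A v v) :
    gammaOSO A ≤ Fintype.card V - min (minOutDeg A) (minInDeg A) := by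
  obtain ⟨S, -, hS⟩ := Finset.exists_subset_card_eq (s := (Finset.univ : Finset V))
    (n := Fintype.card V - min (minOutDeg A) (minInDeg A)) (by simp [Finset.card_univ])
  exact Nat.sInf_le ⟨S, osods_of_card A hloop (min_le_right (minOutDeg A) _) (by omega), hS⟩
end

section
/- Let D be any digraph of order n. Then γ_oso(D) = n if, and only if, for every vertex u of D, d⁺(u)=0 or d⁻(u)=0. -/
/-!
The characterization rests on two observations about a vertex `u` with an out-neighbor `v`.

If `u` also has an in-neighbor `w`, then `V ∖ {v}` is an OSODS: `u` defends `v`, and after the swap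
the only vertex outside the set is `u`, which is dominated by `w` (this also covers `w = v`).
Hence `γ_oso < n`.

Conversely, if an OSODS misses a vertex `v`, some `u` with an arc `u → v` defends it. After the
swap `u` has left the set, so it must have an in-neighbor; thus `u` has both positive out-degree
and positive in-degree. When no such `u` exists, the only OSODS is `V` itself.
-/

open Finset

variable {V : Type*}

theorem outDeg_eq_zero_iff [Finite V] (A : V → V → Prop) (u : V) :
    outDeg A u = 0 ↔ ∀ v, ¬ A u v := by
  rw [outDeg, Finite.card_eq_zero_iff, Set.isEmpty_coe_sort, Set.eq_empty_iff_forall_notMem]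
  rfl

theorem inDeg_eq_zero_iff [Finite V] (A : V → V → Prop) (u : V) :
    inDeg A u = 0 ↔ ∀ v, ¬ A v u := by
  rw [inDeg, Finite.card_eq_zero_iff, Set.isEmpty_coe_sort, Set.eq_empty_iff_forall_notMem]
  rfl

theorem osods_univ [Fintype V] [DecidableEq V] (A : V → V → Prop) :
    OSODS A (univ : Finset V) :=
  ⟨fun v hv => absurd (mem_univ v) hv, fun v hv => absurd (mem_univ v) hv⟩

theorem osods_erase_univ [Fintype V] [DecidableEq V] {A : V → V → Prop}
    (hloop : ∀ v : V, ¬ A v v) {w u v : V} (hwu : A w u) (huv : A u v) :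
    OSODS A (univ.erase v) := by
  have hne : u ≠ v := fun h => hloop v (h ▸ huv)
  have hwne : w ≠ u := fun h => hloop u (h ▸ hwu)
  constructor
  · intro x hx
    obtain rfl : x = v := by simpa using hx
    exact ⟨u, by simp [hne], huv⟩
  · intro x hx
    obtain rfl : x = v := by simpa using hx
    refine ⟨u, by simp [hne], huv, fun y hy => ?_⟩
    have hyu : y = u := by
      simp only [mem_insert, mem_erase, mem_univ, and_true] at hy
      tauto
    subst hyu
    refine ⟨w, ?_, hwu⟩
    simp only [mem_insert, mem_erase, mem_univ, and_true]
    tauto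

/-- The vertex that defends a missing vertex is neither a source nor a sink. -/
theorem OSODS.exists_arcs_of_notMem [DecidableEq V] {A : V → V → Prop}
    (hloop : ∀ v : V, ¬ A v v) {S : Finset V} (hS : OSODS A S) {v : V} (hv : v ∉ S) :
    ∃ w u, A w u ∧ A u v := by
  obtain ⟨u, -, huv, hdom⟩ := hS.2 v hv
  have hne : u ≠ v := fun h => hloop v (h ▸ huv)
  obtain ⟨w, -, hwu⟩ := hdom u (by simp [hne])
  exact ⟨w, u, hwu, huv⟩

/-- `γ_oso(D) = n` iff every vertex has `d⁺(u) = 0` or `d⁻(u) = 0`. -/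
theorem stmt_4 [Fintype V] [DecidableEq V] (A : V → V → Prop) (hloop : ∀ v : V, ¬ A v v) :
    gammaOSO A = Fintype.card V ↔ ∀ u : V, outDeg A u = 0 ∨ inDeg A u = 0 := by
  simp only [outDeg_eq_zero_iff, inDeg_eq_zero_iff]
  constructor
  · intro h u
    by_contra! hcon
    obtain ⟨⟨v, huv⟩, w, hwu⟩ := hcon
    have hle : gammaOSO A ≤ (univ.erase v).card :=
      Nat.sInf_le ⟨_, osods_erase_univ hloop hwu huv, rfl⟩
    have hlt : (univ.erase v).card < Fintype.card V := card_erase_lt_of_mem (mem_univ v)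
    omega
  · intro h
    -- The infimum is attained, because the set of cardinalities is nonempty.
    obtain ⟨S, hS, hcard⟩ : gammaOSO A ∈ {k | ∃ S : Finset V, OSODS A S ∧ S.card = k} :=
      Nat.sInf_mem ⟨_, univ, osods_univ A, rfl⟩
    have hSuniv : S = univ := by
      refine eq_univ_of_forall fun v => ?_
      by_contra hv
      obtain ⟨w, u, hwu, huv⟩ := hS.exists_arcs_of_notMem hloop hv
      exact (h u).elim (fun h' => h' v huv) (fun h' => h' w hwu)
    rw [← hcard, hSuniv, card_univ]
end

section
/- For the directed path P_n = (v₁, v₂, ..., v_n) with n ≥ 1 vertices, γ_oso(P_n) = ⌈2n/3⌉. -/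
/-!
Let `S` be an out-secure out-dominating set of the path `0 → 1 → ⋯ → n - 1`. If `v ∉ S`, the only
possible defender is `v - 1 ∈ S`, and once it has moved to `v` the vertex `v - 1` must itself be
dominated, so `v - 2 ∈ S`. Hence every vertex outside `S` is at least `2` and two such vertices
differ by at least `3`, which leaves room for at most `n / 3` of them: `|S| ≥ n - ⌊n/3⌋ = ⌈2n/3⌉`
(`card_ge_of_osods`). Equality holds for the set of vertices not congruent to `2` modulo `3`
(`osods_pathSet`, `card_pathSet`).
-/

open Finset

variable {V : Type*}

/-- In a path, a vertex outside an out-secure out-dominating set is preceded by two vertices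
of the set: its defender, and the vertex dominating the defender after the move. -/
lemma two_pred_of_osods {n : ℕ} {S : Finset (Fin n)} (hS : OSODS (pathArc n) S)
    {v : Fin n} (hv : v ∉ S) :
    (∃ u ∈ S, (u : ℕ) + 1 = v) ∧ ∃ w ∈ S, (w : ℕ) + 2 = v := by
  obtain ⟨u, hu, huv, hdom⟩ := hS.2 v hv
  simp only [pathArc] at huv
  refine ⟨⟨u, hu, huv⟩, ?_⟩
  have huv' : u ≠ v := fun h => hv (h ▸ hu)
  obtain ⟨w, hw, hwu⟩ := hdom u (by simp [huv'])
  simp only [pathArc] at hwu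
  rcases Finset.mem_insert.1 hw with rfl | hw
  · omega
  · exact ⟨w, Finset.mem_of_mem_erase hw, by omega⟩

lemma card_ge_of_osods {n : ℕ} {S : Finset (Fin n)} (hS : OSODS (pathArc n) S) :
    n - n / 3 ≤ S.card := by
  have hC : Sᶜ.card ≤ (Finset.range (n / 3)).card := by
    -- Vertices outside `S` are `≥ 2` and pairwise at distance `≥ 3`, so this map is injective.
    refine Finset.card_le_card_of_injOn (fun v : Fin n => ((v : ℕ) - 2) / 3) ?_ ?_
    · intro v hv
      obtain ⟨-, w, -, hw⟩ := two_pred_of_osods hS (Finset.mem_compl.1 hv)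
      have := v.isLt
      simp only [Finset.coe_range, Set.mem_Iio]
      omega
    · -- Among two vertices outside `S`, the larger is neither one nor two steps ahead.
      have key : ∀ a b : Fin n, a ∉ S → b ∉ S → (a : ℕ) < b → (a : ℕ) + 3 ≤ b := by
        intro a b ha hb hab
        obtain ⟨⟨u, hu, hu'⟩, w, hw, hw'⟩ := two_pred_of_osods hS hb
        have h1 : (u : ℕ) ≠ a := fun h => ha (Fin.ext h ▸ hu)
        have h2 : (w : ℕ) ≠ a := fun h => ha (Fin.ext h ▸ hw)
        omega
      intro a ha b hb hab
      have ha := Finset.mem_compl.1 ha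
      have hb := Finset.mem_compl.1 hb
      obtain ⟨-, w, -, hw⟩ := two_pred_of_osods hS ha
      obtain ⟨-, w', -, hw'⟩ := two_pred_of_osods hS hb
      have h1 := key a b ha hb
      have h2 := key b a hb ha
      simp only at hab
      ext
      omega
  rw [Finset.card_compl, Fintype.card_fin, Finset.card_range] at hC
  omega

/-- The vertices of the path (numbered from `0`) not congruent to `2` modulo `3`. -/
def pathSet (n : ℕ) : Finset (Fin n) := Finset.univ.filter fun v => (v : ℕ) % 3 ≠ 2

lemma mem_pathSet {n : ℕ} {v : Fin n} : v ∈ pathSet n ↔ (v : ℕ) % 3 ≠ 2 := by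
  simp [pathSet]

lemma osods_pathSet (n : ℕ) : OSODS (pathArc n) (pathSet n) := by
  have hpred : ∀ v : Fin n, v ∉ pathSet n → ∃ u ∈ pathSet n, pathArc n u v := by
    intro v hv
    rw [mem_pathSet] at hv
    exact ⟨⟨v - 1, by omega⟩, mem_pathSet.2 (by simp only; omega), by simp only [pathArc]; omega⟩
  refine ⟨hpred, fun v hv => ?_⟩
  obtain ⟨u, hu, huv⟩ := hpred v hv
  refine ⟨u, hu, huv, fun x hx => ?_⟩
  rw [mem_pathSet] at hv
  simp only [pathArc] at huv
  simp only [Finset.mem_insert, Finset.mem_erase, mem_pathSet, not_or, Fin.ext_iff] at hx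
  -- Outside the new set are `u ≡ 1` and the vertices `≡ 2` other than `v`. None is `0` or the
  -- successor of `u`, so the predecessor exists and was not moved; it is `≡ 0` or `≡ 1`.
  refine ⟨⟨x - 1, by omega⟩, ?_, by simp only [pathArc]; omega⟩
  simp only [Finset.mem_insert, Finset.mem_erase, mem_pathSet, ne_eq, Fin.ext_iff]
  omega

lemma card_pathSet (n : ℕ) : (pathSet n).card ≤ n - n / 3 := by
  have hC : (Finset.univ : Finset (Fin (n / 3))).card ≤ (pathSet n)ᶜ.card := by
    refine Finset.card_le_card_of_injOn
      (fun j => (⟨3 * j + 2, by omega⟩ : Fin n)) ?_ ?_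
    · intro j _
      simp only [Finset.mem_coe, Finset.mem_compl, mem_pathSet]
      omega
    · intro a _ b _ hab
      simp only [Fin.mk.injEq] at hab
      ext
      omega
  rw [Finset.card_compl, Fintype.card_fin, Finset.card_univ, Fintype.card_fin] at hC
  have := (pathSet n).card_le_univ
  rw [Fintype.card_fin] at this
  omega

lemma ceil_two_thirds (n : ℕ) : ⌈(2 * (n : ℚ)) / 3⌉₊ = n - n / 3 := by
  apply le_antisymm
  · rw [Nat.ceil_le, div_le_iff₀ (by norm_num)]
    have : 2 * n ≤ (n - n / 3) * 3 := by omega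
    exact_mod_cast this
  · have h := Nat.le_ceil ((2 * (n : ℚ)) / 3)
    rw [div_le_iff₀ (by norm_num)] at h
    have h' : 2 * n ≤ ⌈(2 * (n : ℚ)) / 3⌉₊ * 3 := by exact_mod_cast h
    omega

/-- `γ_oso(P_n) = ⌈2n/3⌉`. -/
theorem stmt_6 (n : ℕ) (hn : 1 ≤ n) :
    gammaOSO (pathArc n) = ⌈(2 * (n : ℚ)) / 3⌉₊ := by
  rw [ceil_two_thirds]
  apply le_antisymm
  · refine le_trans (Nat.sInf_le ?_) (card_pathSet n)
    exact ⟨pathSet n, osods_pathSet n, rfl⟩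
  · refine le_csInf ⟨_, pathSet n, osods_pathSet n, rfl⟩ ?_
    rintro k ⟨S, hS, rfl⟩
    exact card_ge_of_osods hS
end

section
/- For the directed cycle C_n = (v₁, v₂, ..., v_n, v₁) with n ≥ 3 vertices, γ_oso(C_n) = ⌈2n/3⌉. -/
/-!
On the directed cycle every vertex has exactly one in-neighbor, so the security condition becomes
local: `S` is an out-secure out-dominating set iff each `v ∉ S` has both `v - 1` and `v - 2` in `S`
(`osods_cycle_iff`). These predecessors are distinct for distinct missing vertices, so
`2 (n - |S|) ≤ |S|`, which is the lower bound (`two_mul_le_card`). Omitting every third vertex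
attains it (`exists_osods_cycle`).
-/

open Finset

variable {V : Type*}

theorem cycleArc_iff (m : ℕ) (i j : Fin (m + 3)) : cycleArc (m + 3) i j ↔ j = i + 1 := by
  simp only [cycleArc, Fin.ext_iff, Fin.val_add]
  have h1 : ((1 : Fin (m + 3)) : ℕ) = 1 := rfl
  rw [h1]
  exact eq_comm

/-- On the cycle, an out-secure out-dominating set is one whose missing vertices each have both of
their two predecessors in the set: the only possible defender of `v` is `v - 1`, and after it moves
to `v` the vertex `v - 1` has to be dominated by `v - 2`. -/
theorem osods_cycle_iff (m : ℕ) (S : Finset (Fin (m + 3))) :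
    OSODS (cycleArc (m + 3)) S ↔ ∀ v, v ∉ S → v - 1 ∈ S ∧ v - 1 - 1 ∈ S := by
  have h10 : (1 : Fin (m + 3)) ≠ 0 := by simp
  have h20 : (1 + 1 : Fin (m + 3)) ≠ 0 := by
    have h1 : ((1 : Fin (m + 3)) : ℕ) = 1 := rfl
    simp only [ne_eq, Fin.ext_iff, Fin.val_add, h1, Fin.val_zero]
    rw [Nat.mod_eq_of_lt (by omega)]
    omega
  simp only [OSODS, OutDom, cycleArc_iff, mem_insert, mem_erase]
  constructor
  · rintro ⟨-, h⟩ v hv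
    obtain ⟨u, hu, rfl, hd⟩ := h v hv
    have hne : u ≠ u + 1 := fun h => hv (h ▸ hu)
    obtain ⟨w, hw, hwu⟩ := hd u (by simp [hne])
    have e : u = u + 1 - 1 := (add_sub_cancel_right u 1).symm
    have e2 : w = u + 1 - 1 - 1 := by rw [← e, hwu, add_sub_cancel_right]
    refine ⟨e ▸ hu, ?_⟩
    rw [← e2]
    rcases hw with rfl | hw
    · rw [add_assoc] at hwu
      exact absurd (left_eq_add.1 hwu) h20
    · exact hw.2
  · intro h
    refine ⟨fun v hv => ⟨v - 1, (h v hv).1, (sub_add_cancel _ _).symm⟩, fun v hv => ?_⟩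
    refine ⟨v - 1, (h v hv).1, (sub_add_cancel _ _).symm, fun w hw => ?_⟩
    push Not at hw
    by_cases hwv : w = v - 1
    · refine ⟨w - 1, Or.inr ⟨fun e => h10 ?_, hwv ▸ (h v hv).2⟩, (sub_add_cancel _ _).symm⟩
      rw [← hwv] at e
      exact sub_eq_self.1 e
    · have hwS := hw.2 hwv
      exact ⟨w - 1, Or.inr ⟨fun e => hw.1 (sub_left_injective e), (h w hwS).1⟩, (sub_add_cancel _ _).symm⟩

/-- The maps `v ↦ v - 1` and `v ↦ v - 2` embed two disjoint copies of the complement into `S`. -/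
theorem two_mul_le_card (m : ℕ) (S : Finset (Fin (m + 3)))
    (h : ∀ v, v ∉ S → v - 1 ∈ S ∧ v - 1 - 1 ∈ S) : 2 * (m + 3) ≤ 3 * S.card := by
  have hdisj : Disjoint (Sᶜ.image (fun v => v - 1)) (Sᶜ.image (fun v => v - 1 - 1)) := by
    rw [Finset.disjoint_left]
    intro x hx hx'
    obtain ⟨v, hv, rfl⟩ := mem_image.1 hx
    obtain ⟨w, hw, e⟩ := mem_image.1 hx'
    have e' : w - 1 = v := sub_left_injective e
    exact (mem_compl.1 hv) (e' ▸ (h w (mem_compl.1 hw)).1)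
  have hsub : (Sᶜ.image (fun v => v - 1)) ∪ (Sᶜ.image (fun v => v - 1 - 1)) ⊆ S := by
    intro x hx
    rcases mem_union.1 hx with hx | hx
    · obtain ⟨v, hv, rfl⟩ := mem_image.1 hx
      exact (h v (mem_compl.1 hv)).1
    · obtain ⟨v, hv, rfl⟩ := mem_image.1 hx
      exact (h v (mem_compl.1 hv)).2
  have hc := card_le_card hsub
  rw [card_union_of_disjoint hdisj, card_image_of_injective _ sub_left_injective,
    card_image_of_injective Sᶜ (f := fun v => v - 1 - 1)
      (fun _ _ e => sub_left_injective (sub_left_injective e)), card_compl,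
    Fintype.card_fin] at hc
  omega

/-- Dropping every third vertex leaves a set of the extremal size; the pattern starts with two kept
vertices, so it needs no care where the cycle closes up. -/
theorem exists_osods_cycle (m : ℕ) :
    ∃ S : Finset (Fin (m + 3)), OSODS (cycleArc (m + 3)) S ∧ 3 * S.card ≤ 2 * (m + 3) + 2 := by
  refine ⟨univ.filter (fun v => (v : ℕ) % 3 ≠ 2), ?_, ?_⟩
  · rw [osods_cycle_iff]
    intro v hv
    have hv2 : (v : ℕ) % 3 = 2 := by simpa using hv
    have h1 : ((v - 1 : Fin (m + 3)) : ℕ) = v - 1 :=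
      Fin.val_sub_one_of_ne_zero (by intro h0; simp [h0] at hv2)
    have h2 : ((v - 1 - 1 : Fin (m + 3)) : ℕ) = v - 1 - 1 := by
      rw [Fin.val_sub_one_of_ne_zero, h1]
      intro h0
      rw [h0, Fin.val_zero] at h1
      omega
    simp only [mem_filter, mem_univ, true_and, h1, h2]
    omega
  · have hle : (m + 3) / 3 ≤ (univ.filter (fun v : Fin (m + 3) => ¬ (v : ℕ) % 3 ≠ 2)).card := by
      rw [← Finset.card_range ((m + 3) / 3)]
      refine card_le_card_of_injOn (fun k => Fin.ofNat (m + 3) (3 * k + 2)) ?_ ?_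
      · intro k hk
        have hk' := mem_range.1 (mem_coe.1 hk)
        have : (3 * k + 2) % (m + 3) = 3 * k + 2 := Nat.mod_eq_of_lt (by omega)
        simp only [coe_filter, Set.mem_ofPred_eq, mem_univ, true_and, Fin.val_ofNat, this]
        omega
      · intro k hk l hl e
        have hk' := mem_range.1 (mem_coe.1 hk)
        have hl' := mem_range.1 (mem_coe.1 hl)
        have e' := congrArg Fin.val e
        simp only [Fin.val_ofNat] at e'
        rw [Nat.mod_eq_of_lt (by omega), Nat.mod_eq_of_lt (by omega)] at e'
        omega
    have hsum := card_filter_add_card_filter_not (s := (univ : Finset (Fin (m + 3))))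
      (fun v => (v : ℕ) % 3 ≠ 2)
    rw [card_univ, Fintype.card_fin] at hsum
    omega

/-- `γ_oso(C_n) = ⌈2n/3⌉` for `n ≥ 3`. -/
theorem stmt_7 (n : ℕ) (hn : 3 ≤ n) :
    gammaOSO (cycleArc n) = ⌈(2 * (n : ℚ)) / 3⌉₊ := by
  obtain ⟨m, rfl⟩ : ∃ m, n = m + 3 := ⟨n - 3, by omega⟩
  have hceil : ⌈(2 * ((m + 3 : ℕ) : ℚ)) / 3⌉₊ = (2 * (m + 3) + 2) / 3 := by
    refine le_antisymm ?_ ?_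
    · rw [Nat.ceil_le, div_le_iff₀ (by norm_num)]
      have : 2 * (m + 3) ≤ (2 * (m + 3) + 2) / 3 * 3 := by omega
      exact_mod_cast this
    · have h := Nat.le_ceil ((2 * ((m + 3 : ℕ) : ℚ)) / 3)
      rw [div_le_iff₀ (by norm_num)] at h
      have h' : 2 * (m + 3) ≤ ⌈(2 * ((m + 3 : ℕ) : ℚ)) / 3⌉₊ * 3 := by exact_mod_cast h
      omega
  rw [hceil, gammaOSO]
  obtain ⟨S, hS, hcard⟩ := exists_osods_cycle m
  have hmem : S.card ∈ {k | ∃ S : Finset (Fin (m + 3)), OSODS (cycleArc (m + 3)) S ∧ S.card = k} :=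
    ⟨S, hS, rfl⟩
  refine le_antisymm ((Nat.sInf_le hmem).trans (by omega)) (le_csInf ⟨_, hmem⟩ ?_)
  rintro k ⟨T, hT, rfl⟩
  have := two_mul_le_card m T ((osods_cycle_iff m T).1 hT)
  omega
end

section
/- Let D be a digraph of order n and let l(D) denote the length (number of arcs) of a longest directed path in D. Then γ_oso(D) ≤ n − ⌊(l(D)+1)/3⌋. -/
/-!
Take a longest directed path `p 0, …, p k` and cut it into consecutive triples
`p (3i), p (3i+1), p (3i+2)`, of which there are `⌊(k+1)/3⌋`. The complement `S` of the set of
third vertices is an out-secure out-dominating set: the missing vertex `p (3i+2)` is defended by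
`p (3i+1)`, and after that swap `p (3i+1)` is out-dominated by `p (3i)` while every other missing
vertex keeps its own defender. This is `exists_osods_of_path`; the theorem follows since the
supremum defining `longestPathLen` is attained as soon as `V` is nonempty.
-/

open Finset

variable {V : Type*}

/-- The length `l(D)` of a longest directed path in the digraph `A`. -/
noncomputable def longestPathLen [Fintype V] (A : V → V → Prop) : ℕ :=
  sSup {k | ∃ p : Fin (k + 1) → V, Function.Injective p ∧
    ∀ i : Fin k, A (p i.castSucc) (p i.succ)}

/-- A directed path with `k` arcs yields an OSODS missing exactly `⌊(k+1)/3⌋` vertices, namely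
every third vertex of the path. -/
lemma exists_osods_of_path [Fintype V] [DecidableEq V] (A : V → V → Prop) {k : ℕ}
    (p : Fin (k + 1) → V) (hp : Function.Injective p)
    (hA : ∀ i : Fin k, A (p i.castSucc) (p i.succ)) :
    ∃ S : Finset V, OSODS A S ∧ S.card = Fintype.card V - (k + 1) / 3 := by
  have arc : ∀ (j : ℕ) (h : j + 1 < k + 1), A (p ⟨j, by omega⟩) (p ⟨j + 1, h⟩) :=
    fun j h => hA ⟨j, by omega⟩
  have inj : ∀ (a b : ℕ) (ha : a < k + 1) (hb : b < k + 1), p ⟨a, ha⟩ = p ⟨b, hb⟩ → a = b :=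
    fun a b ha hb h => congrArg Fin.val (hp h)
  let f : Fin ((k + 1) / 3) → V := fun i => p ⟨3 * i.val + 2, by omega⟩
  have hf : Function.Injective f := fun a b h => by
    have := inj _ _ _ _ h
    exact Fin.ext (by omega)
  have hS : ∀ v, v ∉ (univ.image f)ᶜ → ∃ i, f i = v := fun v hv => by simpa using hv
  have keep : ∀ (a : ℕ) (ha : a < k + 1), a % 3 ≠ 2 → p ⟨a, ha⟩ ∈ (univ.image f)ᶜ := by
    intro a ha h
    simp only [mem_compl, mem_image, mem_univ, true_and, not_exists]
    intro i hi
    have := inj _ _ _ _ hi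
    omega
  refine ⟨(univ.image f)ᶜ, ⟨?_, ?_⟩, ?_⟩
  · intro v hv
    obtain ⟨i, rfl⟩ := hS v hv
    exact ⟨_, keep (3 * i.val + 1) (by omega) (by omega), arc _ _⟩
  · intro v hv
    obtain ⟨i, rfl⟩ := hS v hv
    refine ⟨_, keep (3 * i.val + 1) (by omega) (by omega), arc _ _, ?_⟩
    intro w hw
    rw [mem_insert, mem_erase, not_or, not_and] at hw
    by_cases hwu : w = p ⟨3 * i.val + 1, by omega⟩
    · subst hwu
      refine ⟨p ⟨3 * i.val, by omega⟩, mem_insert_of_mem (mem_erase.2 ⟨fun h => ?_,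
        keep _ _ (by omega)⟩), arc _ _⟩
      have := inj _ _ _ _ h
      omega
    · obtain ⟨j, rfl⟩ := hS w (hw.2 hwu)
      refine ⟨p ⟨3 * j.val + 1, by omega⟩, mem_insert_of_mem (mem_erase.2 ⟨fun h => ?_,
        keep _ _ (by omega)⟩), arc _ _⟩
      have := inj _ _ _ _ h
      exact hw.1 (congrArg f (Fin.ext (by omega)))
  · rw [card_compl, card_image_of_injective _ hf, card_univ, Fintype.card_fin]

/-- `γ_oso(D) ≤ n − ⌊(l(D)+1)/3⌋`. -/
theorem stmt_8 [Fintype V] [DecidableEq V] (A : V → V → Prop) (hloop : ∀ v : V, ¬ A v v) :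
    gammaOSO A ≤ Fintype.card V - (longestPathLen A + 1) / 3 := by
  rcases isEmpty_or_nonempty V with hV | ⟨⟨v₀⟩⟩
  · have h : gammaOSO A ≤ 0 :=
      Nat.sInf_le ⟨∅, ⟨fun v => hV.elim v, fun v => hV.elim v⟩, rfl⟩
    exact h.trans (Nat.zero_le _)
  · obtain ⟨p, hp, hA⟩ : longestPathLen A ∈ {k | ∃ p : Fin (k + 1) → V, Function.Injective p ∧
        ∀ i : Fin k, A (p i.castSucc) (p i.succ)} := by
      refine Nat.sSup_mem ⟨0, fun _ => v₀, fun a b _ => Subsingleton.elim (α := Fin 1) a b,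
        fun i => i.elim0⟩ ⟨Fintype.card V, ?_⟩
      rintro k ⟨p, hp, -⟩
      have := Fintype.card_le_of_injective p hp
      rw [Fintype.card_fin] at this
      omega
    exact Nat.sInf_le (exists_osods_of_path A p hp hA)
end

section
/- Let T be a tournament of order n ≥ 3. If there exists a vertex u of T with d⁻(u)=0, then 2 ≤ γ_oso(T) ≤ ⌈log₂(n−1)⌉ + 1. -/
/-!
A vertex `u` of in-degree `0` lies in every out-dominating set. It cannot be swapped out,
since the set obtained would no longer dominate `u`; hence `{u}` alone is not secure and
`γ_oso ≥ 2`.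

For the upper bound, let `D` be an out-dominating set of the subtournament `T - u`. Then
`{u} ∪ D` is an OSODS: a vertex `v` outside it has an in-neighbour `d ∈ D`, and exchanging `d`
for `v` keeps `u`, which by itself dominates everything. A small `D` is produced greedily: some
vertex of a subtournament on `W` has at most as many in-neighbours as out-neighbours in `W`,
so choosing it leaves at most `(|W| - 1) / 2` vertices undominated. This gives
`2 ^ |D| ≤ |W| + 1` (`exists_dominating_subset`), and with `|W| = n - 1 ≥ 2` this implies
`|D| ≤ ⌈log₂ (n - 1)⌉`.
-/

open Finset

variable {V : Type*}

/-- Double counting the arcs inside `W`: some vertex has in-degree at most its out-degree, hence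
in-degree at most `(|W| - 1) / 2`. -/
lemma exists_small_inDegree [DecidableEq V] (A : V → V → Prop) [DecidableRel A]
    (hloop : ∀ v : V, ¬ A v v) (htour : ∀ u v : V, u ≠ v → (A u v ↔ ¬ A v u))
    (W : Finset V) (hW : W.Nonempty) :
    ∃ v ∈ W, 2 * (W.filter fun w => A w v).card + 1 ≤ W.card := by
  have hsum : ∑ v ∈ W, (W.filter fun w => A w v).card ≤
      ∑ v ∈ W, (W.filter fun w => A v w).card :=
    (Finset.sum_card_bipartiteAbove_eq_sum_card_bipartiteBelow (s := W) (t := W) A).ge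
  obtain ⟨v, hv, hle⟩ := Finset.exists_le_of_sum_le hW hsum
  refine ⟨v, hv, ?_⟩
  have hdisj : Disjoint (W.filter fun w => A w v) (W.filter fun w => A v w) := by
    rw [Finset.disjoint_filter]
    intro w _ hwv hvw
    have hne : w ≠ v := by
      rintro rfl
      exact hloop _ hwv
    exact (htour w v hne).1 hwv hvw
  have hsub : (W.filter fun w => A w v) ∪ (W.filter fun w => A v w) ⊆ W.erase v := by
    intro w hw
    have hne : w ≠ v := by
      rintro rfl
      simp [hloop] at hw
    simp only [Finset.mem_union, Finset.mem_filter] at hw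
    exact Finset.mem_erase.2 ⟨hne, by tauto⟩
  have hcard := Finset.card_le_card hsub
  rw [Finset.card_union_of_disjoint hdisj, Finset.card_erase_of_mem hv] at hcard
  have hpos : 0 < W.card := hW.card_pos
  omega

/-- The greedy logarithmic bound for dominating the subtournament induced on `W`. -/
lemma exists_dominating_subset [DecidableEq V] (A : V → V → Prop)
    (hloop : ∀ v : V, ¬ A v v) (htour : ∀ u v : V, u ≠ v → (A u v ↔ ¬ A v u))
    (W : Finset V) :
    ∃ D ⊆ W, (∀ w ∈ W, w ∉ D → ∃ d ∈ D, A d w) ∧ 2 ^ D.card ≤ W.card + 1 := by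
  classical
  induction W using Finset.strongInduction with
  | H W ih =>
    rcases W.eq_empty_or_nonempty with rfl | hW
    · exact ⟨∅, by simp⟩
    obtain ⟨v, hv, hcard⟩ := exists_small_inDegree A hloop htour W hW
    have hss : (W.filter fun w => A w v) ⊂ W :=
      Finset.filter_ssubset.2 ⟨v, hv, hloop v⟩
    obtain ⟨D, hDsub, hDdom, hDcard⟩ := ih _ hss
    refine ⟨insert v D, Finset.insert_subset hv (hDsub.trans hss.subset), ?_, ?_⟩
    · intro w hw hwD
      rw [Finset.mem_insert, not_or] at hwD
      by_cases hvw : A v w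
      · exact ⟨v, Finset.mem_insert_self _ _, hvw⟩
      · obtain ⟨d, hd, hdw⟩ :=
          hDdom w (Finset.mem_filter.2 ⟨hw, (htour w v hwD.1).2 hvw⟩) hwD.2
        exact ⟨d, Finset.mem_insert_of_mem hd, hdw⟩
    · calc 2 ^ (insert v D).card ≤ 2 ^ (D.card + 1) :=
            Nat.pow_le_pow_right two_pos (Finset.card_insert_le _ _)
        _ = 2 * 2 ^ D.card := by ring
        _ ≤ W.card + 1 := by omega

/-- for a tournament of order `n ≥ 3` having a vertex of in-degree `0`,
`2 ≤ γ_oso(T) ≤ ⌈log₂(n−1)⌉ + 1`. -/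
theorem stmt_9 [Fintype V] [DecidableEq V] (A : V → V → Prop)
    (hloop : ∀ v : V, ¬ A v v) (htour : ∀ u v : V, u ≠ v → (A u v ↔ ¬ A v u))
    (hn : 3 ≤ Fintype.card V) (hu : ∃ u : V, inDeg A u = 0) :
    2 ≤ gammaOSO A ∧ gammaOSO A ≤ Nat.clog 2 (Fintype.card V - 1) + 1 := by
  obtain ⟨u, hu⟩ := hu
  have hin : ∀ v, ¬ A v u := by
    intro v hv
    have : IsEmpty {v | A v u} := (Nat.card_eq_zero.1 hu).resolve_right
      (fun h => h.not_finite (Set.toFinite {v | A v u}))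
    exact this.false ⟨v, hv⟩
  have hout : ∀ v, v ≠ u → A u v := fun v hv => (htour u v hv.symm).2 (hin v)
  have hmem : ∀ S : Finset V, OutDom A S → u ∈ S := by
    intro S hS
    by_contra h
    obtain ⟨w, _, hw⟩ := hS u h
    exact hin w hw
  have hdom : ∀ S : Finset V, u ∈ S → OutDom A S := fun S hS v hv =>
    ⟨u, hS, hout v (fun h => hv (h ▸ hS))⟩
  obtain ⟨D, hDsub, hDdom, hDcard⟩ :=
    exists_dominating_subset A hloop htour (Finset.univ.erase u)
  rw [Finset.card_erase_of_mem (Finset.mem_univ u), Finset.card_univ] at hDcard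
  have huD : u ∉ D := fun h => (Finset.mem_erase.1 (hDsub h)).1 rfl
  have hS : OSODS A (insert u D) := by
    refine ⟨hdom _ (Finset.mem_insert_self _ _), fun v hv => ?_⟩
    rw [Finset.mem_insert, not_or] at hv
    obtain ⟨d, hd, hdv⟩ := hDdom v (Finset.mem_erase.2 ⟨hv.1, Finset.mem_univ v⟩) hv.2
    have hud : u ≠ d := fun h => huD (h ▸ hd)
    exact ⟨d, Finset.mem_insert_of_mem hd, hdv, hdom _ (by simp [hud])⟩
  constructor
  · refine le_csInf ⟨_, _, hS, rfl⟩ ?_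
    rintro k ⟨S, hSS, rfl⟩
    by_contra hlt
    have huS := hmem S hSS.1
    have hSu : S = {u} :=
      (Finset.eq_of_subset_of_card_le (Finset.singleton_subset_iff.2 huS)
        (by rw [Finset.card_singleton]; omega)).symm
    subst hSu
    obtain ⟨v, hv⟩ := Fintype.exists_ne_of_one_lt_card (by omega : 1 < Fintype.card V) u
    obtain ⟨w, hw, _, hwd⟩ := hSS.2 v (by simpa using hv)
    rw [Finset.mem_singleton] at hw
    subst hw
    have := hmem _ hwd
    simp [hv.symm] at this
  · have hle : gammaOSO A ≤ (insert u D).card := Nat.sInf_le ⟨_, hS, rfl⟩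
    refine hle.trans ?_
    rw [Finset.card_insert_of_notMem huD]
    have hclog : Fintype.card V - 1 ≤ 2 ^ Nat.clog 2 (Fintype.card V - 1) :=
      Nat.le_pow_clog one_lt_two _
    -- Otherwise `2 (n - 1) ≤ 2 ^ |D| ≤ n`, contradicting `n ≥ 3`.
    by_contra hlt
    have hpow : 2 ^ (Nat.clog 2 (Fintype.card V - 1) + 1) ≤ 2 ^ D.card :=
      Nat.pow_le_pow_right two_pos (by omega)
    rw [pow_succ] at hpow
    omega
end

section
/- Let G be a simple graph. Then there exists an orientation D of G such that γ_s(G) = γ_os(D). -/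
/-!
Every out-secure dominating set of an orientation of `G` is a secure dominating set of `G`, so
`γ_s(G) ≤ γ_os(D)` for each orientation `D`. For equality, take a minimum secure dominating set `S`
and orient every edge between `S` and its complement away from `S` (`orientOut`): each vertex
of `S` that defends a vertex outside `S` is then an in-neighbour of it, so `S` is out-secure
dominating.
-/

open Finset

variable {V : Type*}

/-- `S` is a dominating set of the simple graph `G`. -/
def DomSG (G : SimpleGraph V) (S : Finset V) : Prop :=
  ∀ v : V, v ∉ S → ∃ u ∈ S, G.Adj u v

/-- `S` is a secure dominating set of the simple graph `G`. -/
def SDSg [DecidableEq V] (G : SimpleGraph V) (S : Finset V) : Prop :=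
  DomSG G S ∧ ∀ v : V, v ∉ S → ∃ u ∈ S, G.Adj u v ∧ DomSG G (insert v (S.erase u))

/-- The secure domination number `γ_s(G)` of a simple graph `G`. -/
noncomputable def gammaSg [Fintype V] [DecidableEq V] (G : SimpleGraph V) : ℕ :=
  sInf {k | ∃ S : Finset V, SDSg G S ∧ S.card = k}

/-- Domination only sees the underlying graph, so it is the same for `G` and any orientation. -/
lemma IsOrientation.domG_iff {G : SimpleGraph V} {A : V → V → Prop} (h : IsOrientation G A)
    (S : Finset V) : DomG A S ↔ DomSG G S := by
  simp only [DomG, DomSG, h.1]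

lemma IsOrientation.sdsg_of_osds [DecidableEq V] {G : SimpleGraph V} {A : V → V → Prop}
    (h : IsOrientation G A) {S : Finset V} (hS : OSDS A S) : SDSg G S := by
  refine ⟨(h.domG_iff S).1 hS.1, fun v hv => ?_⟩
  obtain ⟨u, hu, huv, hd⟩ := hS.2 v hv
  exact ⟨u, hu, (h.1 u v).2 (Or.inl huv), (h.domG_iff _).1 hd⟩

/-- Arcs on the edges of `G`: edges between `S` and its complement leave `S`, and all other
edges increase along the labelling `e`. This is an orientation of `G` when `e` is injective. -/
def orientOut (G : SimpleGraph V) (S : Finset V) (e : V → ℕ) (u v : V) : Prop :=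
  G.Adj u v ∧ ((u ∈ S ∧ v ∉ S) ∨ ((u ∈ S ↔ v ∈ S) ∧ e u < e v))

lemma isOrientation_orientOut (G : SimpleGraph V) (S : Finset V) {e : V → ℕ}
    (he : Function.Injective e) : IsOrientation G (orientOut G S e) := by
  refine ⟨fun u v => ⟨fun h => ?_, ?_⟩, ?_⟩
  · have hne : e u ≠ e v := fun h' => h.ne (he h')
    have h' := h.symm
    have := lt_or_gt_of_ne hne
    unfold orientOut
    tauto
  · rintro (h | h)
    · exact h.1
    · exact h.1.symm
  · rintro u v ⟨-, h⟩ ⟨-, h'⟩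
    have := @lt_asymm _ _ (e u) (e v)
    tauto

lemma osds_orientOut [DecidableEq V] {G : SimpleGraph V} {S : Finset V} {e : V → ℕ}
    (he : Function.Injective e) (hS : SDSg G S) : OSDS (orientOut G S e) S := by
  have h := isOrientation_orientOut G S he
  refine ⟨(h.domG_iff S).2 hS.1, fun v hv => ?_⟩
  obtain ⟨u, hu, huv, hd⟩ := hS.2 v hv
  exact ⟨u, hu, ⟨huv, Or.inl ⟨hu, hv⟩⟩, (h.domG_iff _).2 hd⟩

/-- every simple graph has an orientation `D` with `γ_s(G) = γ_os(D)`. -/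
theorem stmt_11 [Fintype V] [DecidableEq V] (G : SimpleGraph V) :
    ∃ A : V → V → Prop, IsOrientation G A ∧ gammaSg G = gammaOS A := by
  have hne : {k | ∃ S : Finset V, SDSg G S ∧ S.card = k}.Nonempty :=
    ⟨_, Finset.univ, ⟨fun v hv => absurd (Finset.mem_univ v) hv,
      fun v hv => absurd (Finset.mem_univ v) hv⟩, rfl⟩
  obtain ⟨S, hS, hcard⟩ := Nat.sInf_mem hne
  have he : Function.Injective fun v : V => (Fintype.equivFin V v : ℕ) :=
    Fin.val_injective.comp (Fintype.equivFin V).injective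
  have hA := isOrientation_orientOut G S he
  have hOS := osds_orientOut he hS
  refine ⟨_, hA, le_antisymm ?_ ?_⟩
  · obtain ⟨T, hT, hTc⟩ := Nat.sInf_mem (s := {k | ∃ T : Finset V, OSDS _ T ∧ T.card = k})
      ⟨_, S, hOS, rfl⟩
    exact Nat.sInf_le ⟨T, hA.sdsg_of_osds hT, hTc⟩
  · exact Nat.sInf_le ⟨S, hOS, hcard⟩
end

section
/- Let G=(V,E) be a simple graph and let I⊆V be an independent set such that every vertex v∈I has degree d(v) ≥ 2 in G. Then there exists an orientation D of G such that γ_os(D) ≤ |V∖I|. -/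
/-!
Put `S = V ∖ I` and orient every edge between `S` and `I` towards `I`, the edges inside `S`
arbitrarily. Since `I` is independent with all degrees at least `2`, each vertex of `I` has at
least two neighbors, all in `S`. Hence `S` is dominating, and for `v ∈ I` with any neighbor `u`
the arc `u → v` defends `v`: in `(S ∖ {u}) ∪ {v}` the vertex `u` is dominated by `v`, and every
other vertex of `I` keeps a neighbor different from `u`. So `S` is an out-secure dominating set.
-/

open Finset

variable {V : Type*}

/-- if `I` is independent with all degrees at least `2`, then some orientation `D`
of `G` satisfies `γ_os(D) ≤ |V ∖ I|`. -/
theorem stmt_12 [Fintype V] [DecidableEq V] (G : SimpleGraph V) [DecidableRel G.Adj]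
    (I : Finset V) (hI : ∀ u ∈ I, ∀ v ∈ I, ¬ G.Adj u v)
    (hdeg : ∀ v ∈ I, 2 ≤ G.degree v) :
    ∃ A : V → V → Prop, IsOrientation G A ∧ gammaOS A ≤ (Finset.univ \ I).card := by
  -- A well-order of `V` directs the edges with both ends outside `I`.
  let A : V → V → Prop := fun u v =>
    G.Adj u v ∧ (v ∈ I ∨ (u ∉ I ∧ WellOrderingRel u v))
  have arc_of_mem {u v : V} (h : G.Adj u v) (hv : v ∈ I) : A u v := ⟨h, Or.inl hv⟩
  have notMem_of_adj {u v : V} (h : G.Adj u v) (hv : v ∈ I) : u ∉ I := fun hu => hI u hu v hv h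
  have two (v : V) (hv : v ∈ I) (x : V) : ∃ u, G.Adj u v ∧ u ≠ x := by
    obtain ⟨u, hu, hux⟩ := Finset.exists_mem_ne
      (show 1 < (G.neighborFinset v).card from hdeg v hv) x
    exact ⟨u, ((G.mem_neighborFinset v u).1 hu).symm, hux⟩
  refine ⟨A, ⟨fun u v => ⟨fun h => ?_, ?_⟩, ?_⟩, Nat.sInf_le ⟨Finset.univ \ I, ⟨?_, ?_⟩, rfl⟩⟩
  · by_cases hv : v ∈ I
    · exact Or.inl (arc_of_mem h hv)
    by_cases hu : u ∈ I
    · exact Or.inr (arc_of_mem h.symm hu)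
    rcases trichotomous_of WellOrderingRel u v with hr | hr | hr
    · exact Or.inl ⟨h, Or.inr ⟨hu, hr⟩⟩
    · exact absurd hr h.ne
    · exact Or.inr ⟨h.symm, Or.inr ⟨hv, hr⟩⟩
  · rintro (h | h)
    · exact h.1
    · exact h.1.symm
  · rintro u v ⟨h, h1⟩ ⟨-, h2⟩
    rcases h1 with hv | ⟨hu, hr⟩
    · rcases h2 with hu | ⟨hv', -⟩
      · exact hI u hu v hv h
      · exact hv' hv
    · rcases h2 with hu' | ⟨-, hr'⟩
      · exact hu hu'
      · exact asymm_of WellOrderingRel hr hr'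
  · intro v hv
    have hvI : v ∈ I := by simpa using hv
    obtain ⟨u, hu, -⟩ := two v hvI v
    exact ⟨u, by simpa using notMem_of_adj hu hvI, Or.inl (arc_of_mem hu hvI)⟩
  · intro v hv
    have hvI : v ∈ I := by simpa using hv
    obtain ⟨u, hu, -⟩ := two v hvI v
    refine ⟨u, by simpa using notMem_of_adj hu hvI, arc_of_mem hu hvI, fun w hw => ?_⟩
    by_cases hwu : w = u
    · exact ⟨v, Finset.mem_insert_self _ _, Or.inr (hwu ▸ arc_of_mem hu hvI)⟩
    have hwI : w ∈ I := by
      by_contra hwI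
      exact hw (by simp [hwu, hwI])
    obtain ⟨x, hx, hxu⟩ := two w hwI u
    have hxI := notMem_of_adj hx hwI
    exact ⟨x, by simp [hxu, hxI], Or.inl (arc_of_mem hx hwI)⟩
end

section
/- For any digraph D of order n ≥ 2 with no isolated vertices in its underlying undirected graph, γ_os(D) ≤ n−1. Moreover, if D is connected (its underlying undirected graph is connected), then γ_os(D) = n−1 if, and only if, D is the directed cycle C₃ or the underlying undirected graph of D is a star. -/
/-!
A single arc `u → v` gives the out-secure dominating set `V ∖ {v}`, so `γ_os ≤ n − 1`. Two
vertex-disjoint arcs `a → b`, `c → d` give the out-secure dominating set `V ∖ {b, d}`: exchanging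
the head of an arc for its tail always leaves one endpoint of each arc in the set. Hence
`γ_os = n − 1` forces the underlying graph to have no two disjoint edges, and such a graph without
isolated vertices is a star or a triangle (`star_or_triangle`). In a triangle, a vertex
with arcs to both others is on its own an out-secure dominating set, and without such a vertex
the triangle is a directed cycle.

Conversely, a set of at most `n − 2` vertices misses two vertices. In a star, if these are two leaves
then only the center can defend the first, which leaves the second undominated, and if one is the
center then the other is not dominated. In `C₃` both missing
vertices could only be defended by the third vertex, which has a single out-neighbor.
-/

open Finset

variable {V : Type*}

lemma gammaOS_le [Fintype V] [DecidableEq V] {A : V → V → Prop} {S : Finset V}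
    (h : OSDS A S) : gammaOS A ≤ S.card :=
  Nat.sInf_le ⟨S, h, rfl⟩

/-- If no out-secure dominating set misses two vertices, then `γ_os ≥ n − 1`. -/
lemma le_gammaOS [Fintype V] [DecidableEq V] {A : V → V → Prop}
    (h : ∀ S : Finset V, OSDS A S → ∀ a b, a ≠ b → a ∉ S → b ∉ S → False) :
    Fintype.card V - 1 ≤ gammaOS A := by
  have huniv : OSDS A univ := ⟨fun v hv => absurd (mem_univ v) hv,
    fun v hv => absurd (mem_univ v) hv⟩
  refine le_csInf ⟨_, univ, huniv, rfl⟩ ?_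
  rintro k ⟨S, hS, rfl⟩
  by_contra hlt
  have hcard : 1 < Sᶜ.card := by rw [card_compl]; omega
  obtain ⟨a, ha, b, hb, hab⟩ := one_lt_card.1 hcard
  exact h S hS a b hab (mem_compl.1 ha) (mem_compl.1 hb)

lemma gammaOS_le_of_arc [Fintype V] [DecidableEq V] {A : V → V → Prop} {a b : V}
    (hne : a ≠ b) (hab : A a b) : gammaOS A ≤ Fintype.card V - 1 := by
  have hS : OSDS A (univ.erase b) := by
    refine ⟨fun v hv => ⟨a, ?_⟩, fun v hv => ⟨a, ?_, ?_, fun w hw => ⟨b, ?_⟩⟩⟩ <;> simp at * <;> grind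
  simpa [card_erase_of_mem] using gammaOS_le hS

lemma gammaOS_lt_of_disjoint_arcs [Fintype V] [DecidableEq V] {A : V → V → Prop} {a b c d : V}
    (hab : A a b) (hcd : A c d) (h1 : a ≠ b) (h2 : a ≠ c) (h3 : a ≠ d) (h4 : b ≠ c) (h5 : b ≠ d)
    (h6 : c ≠ d) : gammaOS A < Fintype.card V - 1 := by
  have hS : OSDS A ({b, d}ᶜ) := by
    refine ⟨fun v hv => ?_, fun v hv => ?_⟩
    · have hv : v = b ∨ v = d := by simpa [or_iff_not_imp_left] using hv
      rcases hv with rfl | rfl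
      · exact ⟨a, by simp [*], Or.inl hab⟩
      · exact ⟨c, by simp [*, Ne.symm h4], Or.inl hcd⟩
    · have hv : v = b ∨ v = d := by simpa [or_iff_not_imp_left] using hv
      rcases hv with rfl | rfl
      · refine ⟨a, by simp [*], hab, fun w hw => ?_⟩
        have : w = a ∨ w = d := by simp at hw; grind
        rcases this with rfl | rfl
        · exact ⟨v, by simp, Or.inr hab⟩
        · exact ⟨c, by simp; grind, Or.inl hcd⟩
      · refine ⟨c, by simp; grind, hcd, fun w hw => ?_⟩
        have : w = c ∨ w = b := by simp at hw; grind
        rcases this with rfl | rfl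
        · exact ⟨v, by simp, Or.inr hcd⟩
        · exact ⟨a, by simp; grind, Or.inl hab⟩
  have h := gammaOS_le hS
  rw [card_compl, card_pair h5] at h
  have h7 : ({a, b, c} : Finset V).card ≤ Fintype.card V := card_le_univ _
  rw [card_eq_three.2 ⟨a, b, c, h1, h2, h4, rfl⟩] at h7
  omega

/-- The orientations of two disjoint edges are irrelevant, since their tails can be kept. -/
lemma gammaOS_lt_of_disjoint_edges [Fintype V] [DecidableEq V] {A : V → V → Prop} {a b c d : V}
    (hab : A a b ∨ A b a) (hcd : A c d ∨ A d c) (h1 : a ≠ b) (h2 : a ≠ c) (h3 : a ≠ d)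
    (h4 : b ≠ c) (h5 : b ≠ d) (h6 : c ≠ d) : gammaOS A < Fintype.card V - 1 := by
  rcases hab with hab | hab <;> rcases hcd with hcd | hcd
  · exact gammaOS_lt_of_disjoint_arcs hab hcd h1 h2 h3 h4 h5 h6
  · exact gammaOS_lt_of_disjoint_arcs hab hcd h1 h3 h2 h5 h4 h6.symm
  · exact gammaOS_lt_of_disjoint_arcs hab hcd h1.symm h4 h5 h2 h3 h6
  · exact gammaOS_lt_of_disjoint_arcs hab hcd h1.symm h5 h4 h3 h2 h6.symm

/-- A graph with no isolated vertices and no two disjoint edges is a star or a triangle. -/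
lemma star_or_triangle [Nonempty V] {E : V → V → Prop} (hirr : ∀ v, ¬ E v v)
    (hsymm : ∀ u v, E u v → E v u) (hniso : ∀ v, ∃ u, E v u)
    (hdisj : ∀ a b c d, E a b → E c d → a = c ∨ a = d ∨ b = c ∨ b = d) :
    (∃ c, ∀ u v, E u v ↔ ((u = c ∧ v ≠ c) ∨ (v = c ∧ u ≠ c))) ∨
    ∃ a b c, a ≠ b ∧ b ≠ c ∧ a ≠ c ∧ E a b ∧ E b c ∧ E a c ∧ ∀ v, v = a ∨ v = b ∨ v = c := by
  obtain ⟨a⟩ := ‹Nonempty V›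
  obtain ⟨b, hab⟩ := hniso a
  -- A vertex meeting every edge is adjacent to every other vertex, hence the center of a star.
  have hstar : ∀ c, (∀ u v, E u v → u = c ∨ v = c) →
      ∀ u v, E u v ↔ ((u = c ∧ v ≠ c) ∨ (v = c ∧ u ≠ c)) := by
    intro c hc u v
    constructor
    · grind
    · rintro (⟨rfl, hv⟩ | ⟨rfl, hu⟩)
      · obtain ⟨w, hw⟩ := hniso v
        grind
      · obtain ⟨w, hw⟩ := hniso u
        grind
  by_cases ha : ∀ u v, E u v → u = a ∨ v = a
  · exact Or.inl ⟨a, hstar a ha⟩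
  by_cases hb : ∀ u v, E u v → u = b ∨ v = b
  · exact Or.inl ⟨b, hstar b hb⟩
  push Not at ha hb
  obtain ⟨p, q, hpq, hp, hq⟩ := ha
  obtain ⟨r, s, hrs, hr, hs⟩ := hb
  obtain ⟨x, hbx, hxa⟩ : ∃ x, E b x ∧ x ≠ a := by
    have hbpq : b = p ∨ b = q := by
      have := hdisj _ _ _ _ hab hpq
      grind only
    rcases hbpq with rfl | rfl
    · exact ⟨q, hpq, hq⟩
    · exact ⟨p, hsymm _ _ hpq, hp⟩
  obtain ⟨y, hay, hyb⟩ : ∃ y, E a y ∧ y ≠ b := by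
    have hars : a = r ∨ a = s := by
      have := hdisj _ _ _ _ hab hrs
      grind only
    rcases hars with rfl | rfl
    · exact ⟨s, hrs, hs⟩
    · exact ⟨r, hsymm _ _ hrs, hr⟩
  have hxy : x = y := by
    have := hdisj _ _ _ _ hbx hay
    have hba : b ≠ a := fun h => hirr a (h ▸ hab)
    grind only
  subst hxy
  have hba : a ≠ b := fun h => hirr b (h ▸ hab)
  refine Or.inr ⟨a, b, x, hba, hyb.symm, hxa.symm, hab, hbx, hay, fun v => ?_⟩
  obtain ⟨w, hw⟩ := hniso v
  have h1 := hdisj _ _ _ _ hw hab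
  have h2 := hdisj _ _ _ _ hw hbx
  have h3 := hdisj _ _ _ _ hw hay
  clear hdisj hstar hsymm hniso
  grind only

/-- In a triangle with `γ_os = 2`, no vertex has arcs to both others. -/
lemma not_two_out [Fintype V] [DecidableEq V] {A : V → V → Prop} {a b c : V} (h1 : a ≠ b)
    (h2 : b ≠ c) (h3 : a ≠ c) (hbc : A b c ∨ A c b) (hall : ∀ v, v = a ∨ v = b ∨ v = c)
    (hg : gammaOS A = Fintype.card V - 1) (hab : A a b) (hac : A a c) : False := by
  have hS : OSDS A {a} := by
    have hout : ∀ v, v ∉ ({a} : Finset V) → A a v := by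
      intro v hv
      rcases hall v with rfl | rfl | rfl
      · simp at hv
      · exact hab
      · exact hac
    refine ⟨fun v hv => ⟨a, by simp, Or.inl (hout v hv)⟩,
      fun v hv => ⟨a, by simp, hout v hv, fun w hw => ⟨v, by simp, ?_⟩⟩⟩
    have hwv : w ≠ v := by rintro rfl; simp at hw
    have hva : v ≠ a := by simpa using hv
    have hav := hout v hv
    rcases hall v with rfl | rfl | rfl <;> rcases hall w with rfl | rfl | rfl <;> tauto
  have h := gammaOS_le hS
  have h7 : ({a, b, c} : Finset V).card ≤ Fintype.card V := card_le_univ _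
  rw [card_eq_three.2 ⟨a, b, c, h1, h3, h2, rfl⟩] at h7
  rw [card_singleton] at h
  omega

/-- A triangle on `a, b, c` with `γ_os = n − 1` and the arc `a → b` is the directed cycle
`a → b → c → a`, because `not_two_out` fixes the remaining arcs one after the other. -/
lemma cycle_of_triangle [Fintype V] [DecidableEq V] {A : V → V → Prop} {a b c : V}
    (hloop : ∀ v, ¬ A v v) (h1 : a ≠ b) (h2 : b ≠ c) (h3 : a ≠ c) (hab : A a b)
    (hbc : A b c ∨ A c b) (hac : A a c ∨ A c a) (hall : ∀ v, v = a ∨ v = b ∨ v = c)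
    (hg : gammaOS A = Fintype.card V - 1) :
    ∃ e : V ≃ Fin 3, ∀ u v : V, A u v ↔ ((e u : ℕ) + 1) % 3 = (e v : ℕ) := by
  have hnac : ¬ A a c := fun h => not_two_out h1 h2 h3 hbc hall hg hab h
  have hca : A c a := hac.resolve_left hnac
  have hncb : ¬ A c b := fun h =>
    not_two_out h3.symm h1 h2.symm (Or.inl hab)
      (fun v => by have := hall v; tauto) hg hca h
  have hbc' : A b c := hbc.resolve_right hncb
  have hnba : ¬ A b a := fun h =>
    not_two_out h2 h3.symm h1.symm (Or.inl hca)
      (fun v => by have := hall v; tauto) hg hbc' h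
  have hbij : Function.Bijective ![a, b, c] := by
    constructor
    · intro i j hij
      fin_cases i <;> fin_cases j <;> simp_all
    · intro v
      rcases hall v with rfl | rfl | rfl
      · exact ⟨0, rfl⟩
      · exact ⟨1, rfl⟩
      · exact ⟨2, rfl⟩
  refine ⟨(Equiv.ofBijective _ hbij).symm, fun u v => ?_⟩
  obtain ⟨i, rfl⟩ := (Equiv.ofBijective _ hbij).surjective u
  obtain ⟨j, rfl⟩ := (Equiv.ofBijective _ hbij).surjective v
  rw [Equiv.symm_apply_apply, Equiv.symm_apply_apply]
  fin_cases i <;> fin_cases j <;> simp [*]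

/-- `γ_os(D) ≤ n − 1`; for connected `D`, equality holds iff `D` is the directed
cycle `C₃` or the underlying graph of `D` is a star. -/
theorem stmt_14 [Fintype V] [DecidableEq V] (A : V → V → Prop) (hloop : ∀ v : V, ¬ A v v)
    (hn : 2 ≤ Fintype.card V) (hniso : ∀ v : V, ∃ u : V, u ≠ v ∧ (A u v ∨ A v u)) :
    gammaOS A ≤ Fintype.card V - 1 ∧
    ((SimpleGraph.fromRel A).Connected →
      (gammaOS A = Fintype.card V - 1 ↔
        ((∃ e : V ≃ Fin 3, ∀ u v : V, A u v ↔ ((e u : ℕ) + 1) % 3 = (e v : ℕ)) ∨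
         (∃ c : V, ∀ u v : V, (A u v ∨ A v u) ↔
            ((u = c ∧ v ≠ c) ∨ (v = c ∧ u ≠ c)))))) := by
  have hV : Nonempty V := Fintype.card_pos_iff.1 (by omega)
  have hle : gammaOS A ≤ Fintype.card V - 1 := by
    obtain ⟨v⟩ := hV
    obtain ⟨u, huv, h | h⟩ := hniso v
    · exact gammaOS_le_of_arc huv h
    · exact gammaOS_le_of_arc huv.symm h
  refine ⟨hle, fun _ => ⟨fun hg => ?_, ?_⟩⟩
  · have hdisj : ∀ a b c d, (A a b ∨ A b a) → (A c d ∨ A d c) →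
        a = c ∨ a = d ∨ b = c ∨ b = d := by
      intro a b c d hab hcd
      by_contra! h
      exact absurd hg (gammaOS_lt_of_disjoint_edges hab hcd (by grind) h.1 h.2.1 h.2.2.1 h.2.2.2
        (by grind)).ne
    rcases star_or_triangle (E := fun u v => A u v ∨ A v u) (by grind) (fun u v h => h.symm)
      (fun v => (hniso v).imp fun u hu => hu.2.symm) hdisj with h | ⟨a, b, c, h1, h2, h3, hab, hbc, hac, hall⟩
    · exact Or.inr h
    · refine Or.inl ?_
      rcases hab with hab | hab
      · exact cycle_of_triangle hloop h1 h2 h3 hab hbc hac hall hg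
      · exact cycle_of_triangle hloop h1.symm h3 h2 hab hac hbc
          (fun v => by have := hall v; tauto) hg
  · rintro (⟨e, he⟩ | ⟨c, hc⟩)
    · refine le_antisymm hle (le_gammaOS fun S hS a b hab ha hb => ?_)
      obtain ⟨u, hu, hua, -⟩ := hS.2 a ha
      obtain ⟨w, hw, hwb, -⟩ := hS.2 b hb
      have hne : e a ≠ e b := e.injective.ne hab
      have h1 : e u ≠ e a := e.injective.ne (by grind)
      have h2 : e u ≠ e b := e.injective.ne (by grind)
      have h3 : e w ≠ e a := e.injective.ne (by grind)
      have h4 : e w ≠ e b := e.injective.ne (by grind)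
      rw [he] at hua hwb
      -- `u` and `w` are both the third vertex, which has only one out-neighbor.
      omega
    · refine le_antisymm hle (le_gammaOS fun S hS a b hab ha hb => ?_)
      obtain ⟨u, hu, hua, hdom⟩ := hS.2 a ha
      obtain ⟨w, hw, hwb⟩ := hS.1 b hb
      obtain ⟨x, hx, hxb⟩ := hdom b (by simp [hab.symm, hb])
      have h1 := (hc u a).1 (Or.inl hua)
      have h2 := (hc w b).1 hwb
      have h3 := (hc x b).1 hxb
      simp only [mem_insert, mem_erase] at hx
      grind
end

section
/- For the directed path P_n = (v₁, v₂, ..., v_n) with n ≥ 1 vertices, γ_os(P_n) = ⌈n/2⌉. -/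
/-!
An out-secure dominating set `S` of the directed path contains the predecessor of every vertex
outside `S`. Predecessors are unique and distinct vertices have distinct predecessors, so
`|V ∖ S| ≤ |S|` and `n ≤ 2|S|`. Conversely the set of vertices `v₁, v₃, v₅, …` is out-secure
dominating: each vertex outside it is defended by its predecessor, and the pairs
`{v₁, v₂}, {v₃, v₄}, …` still contain a chosen vertex each after the swap
(for odd `n` the last block is `{v_n}`, with `v_n` chosen throughout).
-/

open Finset

variable {V : Type*}

theorem card_le_of_OSDS_path {n : ℕ} {S : Finset (Fin n)} (hS : OSDS (pathArc n) S) :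
    n ≤ 2 * S.card := by
  choose! p hpS hpA _ using hS.2
  have h : Sᶜ.card ≤ S.card := by
    refine Finset.card_le_card_of_injOn p (fun v hv => hpS v (by simpa using hv)) ?_
    intro v hv w hw hvw
    have h1 := hpA v (by simpa using hv)
    have h2 := hpA w (by simpa using hw)
    rw [hvw] at h1
    exact Fin.ext (h1.symm.trans h2)
  have h' := Finset.card_add_card_compl S
  rw [Fintype.card_fin] at h'
  omega

/-- Vertices are numbered from `0`, so the even indices are the vertices `v₁, v₃, v₅, …`. -/
theorem OSDS_path_even (n : ℕ) :
    OSDS (pathArc n) (univ.filter fun i : Fin n => (i : ℕ) % 2 = 0) := by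
  have pred : ∀ v : Fin n, (v : ℕ) % 2 ≠ 0 →
      ∃ u : Fin n, (u : ℕ) % 2 = 0 ∧ (u : ℕ) + 1 = v := fun v hv =>
    ⟨⟨v - 1, by omega⟩, show ((v : ℕ) - 1) % 2 = 0 by omega,
      show (v : ℕ) - 1 + 1 = v by omega⟩
  refine ⟨fun v hv => ?_, fun v hv => ?_⟩
  · obtain ⟨u, hu, huv⟩ := pred v (by simpa using hv)
    exact ⟨u, by simpa using hu, Or.inl huv⟩
  · obtain ⟨u, hu, huv⟩ := pred v (by simpa using hv)
    refine ⟨u, by simpa using hu, huv, fun w hw => ?_⟩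
    by_cases hwu : w = u
    · exact ⟨v, by simp, Or.inr (by rw [hwu]; exact huv)⟩
    · simp only [mem_insert, mem_erase, mem_filter, mem_univ, true_and, not_or, not_and] at hw
      obtain ⟨x, hx, hxw⟩ := pred w (hw.2 hwu)
      have hxu : x ≠ u := by
        rintro rfl
        exact hw.1 (Fin.ext (hxw.symm.trans huv))
      exact ⟨x, by simp [hxu, hx], Or.inl hxw⟩

theorem card_even_le (n : ℕ) :
    (univ.filter fun i : Fin n => (i : ℕ) % 2 = 0).card ≤ (n + 1) / 2 := by
  rw [← Finset.card_range ((n + 1) / 2)]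
  refine Finset.card_le_card_of_injOn (fun i => (i : ℕ) / 2) (fun i hi => ?_) ?_
  · have := i.isLt
    simp only [coe_filter, Set.mem_ofPred_eq, mem_univ, true_and, coe_range, Set.mem_Iio] at hi ⊢
    omega
  · intro i hi j hj hij
    simp only [coe_filter, Set.mem_ofPred_eq, mem_univ, true_and] at hi hj hij
    exact Fin.ext (by omega)

/-- `γ_os(P_n) = ⌈n/2⌉`. -/
theorem stmt_15 (n : ℕ) (hn : 1 ≤ n) :
    gammaOS (pathArc n) = ⌈(n : ℚ) / 2⌉₊ := by
  apply le_antisymm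
  · have hle : gammaOS (pathArc n) ≤ (univ.filter fun i : Fin n => (i : ℕ) % 2 = 0).card :=
      Nat.sInf_le ⟨_, OSDS_path_even n, rfl⟩
    refine hle.trans ((card_even_le n).trans ?_)
    have h : (n : ℚ) / 2 ≤ (⌈(n : ℚ) / 2⌉₊ : ℚ) := Nat.le_ceil _
    have h' : n ≤ 2 * ⌈(n : ℚ) / 2⌉₊ := by
      have : (n : ℚ) ≤ 2 * (⌈(n : ℚ) / 2⌉₊ : ℚ) := by linarith
      exact_mod_cast this
    omega
  · refine le_csInf ⟨_, _, OSDS_path_even n, rfl⟩ ?_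
    rintro k ⟨S, hS, rfl⟩
    have h : (n : ℚ) ≤ 2 * (S.card : ℚ) := by exact_mod_cast card_le_of_OSDS_path hS
    exact Nat.ceil_le.mpr (by linarith)
end

section
/- For the directed path P_n = (v₁, v₂, ..., v_n) with n ≥ 1 vertices, γ_so(P_n) = ⌈3n/5⌉. Moreover, for the directed cycle C_n with n ≥ 3 vertices, γ_so(C_n) = ⌈3n/5⌉. -/
/-!
Every path arc is a cycle arc, so a secure out-dominating set (SODS) of `P_n` is one of `C_n`.
Hence it suffices to exhibit an SODS of `P_n` with `⌈3n/5⌉` vertices and to show that every SODS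
of `C_n` with `n ≥ 3` has at least `3n/5` vertices (`P_1` and `P_2` are treated separately).

*Upper bound* (`witness_sods`, `witness_card`): repeat the pattern `10110` along the path, and add
the last vertex when `n ≡ 2 (mod 5)`. A missing vertex of residue `1` is defended by its
out-neighbor, one of residue `4` by its in-neighbor.

*Lower bound* (`lower_bound`): write `σ` for the successor map of the cycle. If `v ∉ S`, then
`σ⁻¹ v ∈ S`, and moreover either `σ v, σ² v ∈ S` (the defender is `σ v`) or `σ⁻¹ v, σ⁻² v ∈ S`
(the defender is `σ⁻¹ v`). Let each `u ∈ S` have two units of charge. It sends to a neighbor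
outside `S` one unit if the other neighbor of `u` is also outside `S`, and two units otherwise.
No vertex of `S` sends more than two units, and each vertex `v` outside `S` receives at least three:
`σ v ∈ S` because `v ∉ S` cannot dominate it, so both neighbors of `v` lie in `S`, and by the
alternative above at least one of them sends two units.
Hence `3 (n - |S|) ≤ 2 |S|`.
-/

open Finset

variable {V : Type*}

/-- Enlarging the arc relation preserves secure out-domination. -/
lemma SODS.mono [DecidableEq V] {A B : V → V → Prop} (h : ∀ u v, A u v → B u v) {S : Finset V}
    (hS : SODS A S) : SODS B S := by
  have key : ∀ T : Finset V, OutDom A T → OutDom B T := fun T hT v hv => by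
    obtain ⟨u, hu, huv⟩ := hT v hv
    exact ⟨u, hu, h _ _ huv⟩
  refine ⟨key _ hS.1, fun v hv => ?_⟩
  obtain ⟨u, hu, huv, hd⟩ := hS.2 v hv
  exact ⟨u, hu, huv.imp (h _ _) (h _ _), key _ hd⟩

/-- On a functional digraph `u → σ u` given by a permutation without cycles of length at most two,
an SODS contains the in-neighbor of each vertex it misses, together with the two vertices that
follow it or the two that precede it. -/
lemma SODS.local_structure [DecidableEq V] {A : V → V → Prop} (σ : Equiv.Perm V)
    (hA : ∀ u v, A u v ↔ σ u = v) (hσ : ∀ v, σ (σ v) ≠ v) {S : Finset V} (hS : SODS A S)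
    (v : V) (hv : v ∉ S) :
    σ.symm v ∈ S ∧ ((σ v ∈ S ∧ σ (σ v) ∈ S) ∨ σ.symm (σ.symm v) ∈ S) := by
  constructor
  · obtain ⟨u, hu, huv⟩ := hS.1 v hv
    rw [hA] at huv
    rwa [← huv, Equiv.symm_apply_apply]
  obtain ⟨u, hu, huv, hd⟩ := hS.2 v hv
  rcases huv with huv | huv <;> rw [hA] at huv
  · left
    subst huv
    refine ⟨hu, ?_⟩
    by_contra hw
    obtain ⟨x, hx, hxw⟩ := hd (σ (σ v)) (by simp [hσ, hw])
    rw [hA, σ.injective.eq_iff] at hxw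
    subst hxw
    simp only [mem_insert, mem_erase, ne_eq, not_true_eq_false, false_and, or_false] at hx
    exact hv (hx ▸ hu)
  · right
    subst huv
    rw [Equiv.symm_apply_apply]
    obtain ⟨x, hx, hxu⟩ := hd u (by
      simp only [mem_insert, mem_erase, ne_eq, not_true_eq_false, false_and, or_false]
      intro h
      exact hv (h ▸ hu))
    rw [hA] at hxu
    subst hxu
    rw [Equiv.symm_apply_apply]
    simp only [mem_insert, mem_erase] at hx
    rcases hx with hx | hx
    · exact absurd hx.symm (hσ x)
    · exact hx.2

/-- The discharging inequality, in the division-free form `3 |V| ≤ 5 |S|`. -/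
lemma lower_bound [Fintype V] [DecidableEq V] {A : V → V → Prop} (σ : Equiv.Perm V)
    (hA : ∀ u v, A u v ↔ σ u = v) (hσ : ∀ v, σ (σ v) ≠ v) {S : Finset V} (hS : SODS A S) :
    3 * Fintype.card V ≤ 5 * S.card := by
  let x : V → ℤ := fun v => if v ∈ S then 1 else 0
  -- `r v` and `l v` are the charges that `v` receives from `σ v` and from `σ⁻¹ v`.
  let r : V → ℤ := fun v => (1 - x v) * x (σ v) * (1 + x (σ (σ v)))
  let l : V → ℤ := fun v => (1 - x v) * x (σ.symm v) * (1 + x (σ.symm (σ.symm v)))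
  have h1 : ∀ v, 3 * (1 - x v) ≤ r v + l v := by
    intro v
    by_cases hv : v ∈ S
    · simp [r, l, x, hv]
    · obtain ⟨ha, hb⟩ := hS.local_structure σ hA hσ v hv
      -- If `σ v ∉ S`, its in-neighbor `v` would have to lie in `S`.
      have hc : σ v ∈ S := by
        by_contra hc
        have := (hS.local_structure σ hA hσ (σ v) hc).1
        rw [Equiv.symm_apply_apply] at this
        exact hv this
      simp only [r, l, x, hv, ha, hc, if_true, if_false]
      split_ifs <;> first | (exfalso; tauto) | norm_num
  have h2 : ∑ v, (r v + l v) ≤ ∑ v, 2 * x v := by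
    rw [sum_add_distrib, ← Equiv.sum_comp σ.symm r, ← Equiv.sum_comp σ l, ← sum_add_distrib]
    refine sum_le_sum fun u _ => ?_
    simp only [r, l, x, Equiv.symm_apply_apply, Equiv.apply_symm_apply]
    split_ifs <;> norm_num
  have h3 := (sum_le_sum fun v (_ : v ∈ (univ : Finset V)) => h1 v).trans h2
  have h4 : ∑ v, x v = S.card := by simp [x]
  rw [← mul_sum, ← mul_sum, sum_sub_distrib, h4] at h3
  simp only [sum_const, card_univ, nsmul_eq_mul, mul_one] at h3
  omega

/-- The vertices (numbered from `0`) of an optimal SODS of the path on `n` vertices: the pattern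
`10110` repeated, together with the last vertex if `n ≡ 2 (mod 5)`. -/
def witness (n : ℕ) : Finset (Fin n) :=
  univ.filter fun i : Fin n =>
    (i : ℕ) % 5 = 0 ∨ (i : ℕ) % 5 = 2 ∨ (i : ℕ) % 5 = 3 ∨ ((i : ℕ) % 5 = 1 ∧ (i : ℕ) + 1 = n)

lemma witness_sods (n : ℕ) :
    SODS (pathArc n) (witness n) := by
  -- Vertex `0` is never missing, so every missing vertex `v` has the in-neighbor `v - 1`.
  constructor
  · intro v hv
    have := v.2
    simp only [mem_filter, mem_univ, true_and, witness] at hv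
    refine ⟨⟨v - 1, by omega⟩, ?_, ?_⟩
    · simp only [mem_filter, mem_univ, true_and, witness]; omega
    · simp only [pathArc]; omega
  · intro v hv
    have := v.2
    simp only [mem_filter, mem_univ, true_and, witness] at hv
    have hv' : (v : ℕ) % 5 = 1 ∧ (v : ℕ) + 1 < n ∨ (v : ℕ) % 5 = 4 := by omega
    rcases hv' with ⟨h1, h2⟩ | h4
    · refine ⟨⟨v + 1, h2⟩, ?_, Or.inl (by simp [pathArc]), ?_⟩
      · simp only [mem_filter, mem_univ, true_and, witness]; omega
      · intro w hw
        have := w.2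
        simp only [mem_insert, mem_erase, mem_filter, mem_univ, true_and, witness,
          Fin.ext_iff, ne_eq] at hw
        refine ⟨⟨w - 1, by omega⟩, ?_, ?_⟩
        · simp only [mem_insert, mem_erase, mem_filter, mem_univ, true_and, witness,
            Fin.ext_iff, ne_eq]
          omega
        · simp only [pathArc]; omega
    · refine ⟨⟨v - 1, by omega⟩, ?_, Or.inr (by simp only [pathArc]; omega), ?_⟩
      · simp only [mem_filter, mem_univ, true_and, witness]; omega
      · intro w hw
        have := w.2
        simp only [mem_insert, mem_erase, mem_filter, mem_univ, true_and, witness,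
          Fin.ext_iff, ne_eq] at hw
        refine ⟨⟨w - 1, by omega⟩, ?_, ?_⟩
        · simp only [mem_insert, mem_erase, mem_filter, mem_univ, true_and, witness,
            Fin.ext_iff, ne_eq]
          omega
        · simp only [pathArc]; omega

lemma witness_card (n : ℕ) :
    (witness n).card ≤ (3 * n + 4) / 5 := by
  -- The pattern `10110` has `⌊(3k+3)/5⌋` ones among its first `k` entries.
  have key : ∀ k ≤ n, ∑ i ∈ range k,
      (if i % 5 = 0 ∨ i % 5 = 2 ∨ i % 5 = 3 ∨ (i % 5 = 1 ∧ i + 1 = n) then 1 else 0) ≤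
      (3 * k + 3) / 5 + if k = n ∧ n % 5 = 2 then 1 else 0 := by
    intro k
    induction k with
    | zero => intro _; simp
    | succ k ih =>
      intro hk
      have := ih (by omega)
      rw [if_neg (by omega)] at this
      rw [sum_range_succ]
      split_ifs <;> omega
  have := key n le_rfl
  rw [witness, card_filter, Fin.sum_univ_eq_sum_range
    (fun i => if i % 5 = 0 ∨ i % 5 = 2 ∨ i % 5 = 3 ∨ (i % 5 = 1 ∧ i + 1 = n) then 1 else 0)]
  split_ifs at this <;> omega

lemma cycle_lower (n : ℕ) (hn : 3 ≤ n) (S : Finset (Fin n)) (hS : SODS (cycleArc n) S) :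
    (3 * n + 4) / 5 ≤ S.card := by
  obtain ⟨m, rfl⟩ : ∃ m, n = m + 3 := ⟨n - 3, by omega⟩
  have h := lower_bound (Equiv.addRight (1 : Fin (m + 3)))
    (fun u v => by simp [cycleArc, Fin.ext_iff, Fin.val_add])
    (fun v => by
      simp only [Equiv.coe_addRight, add_assoc, ne_eq, add_eq_left]
      rw [Fin.ext_iff, Fin.val_add]
      simp [Nat.mod_eq_of_lt (show 1 + 1 < m + 3 by omega)]) hS
  rw [Fintype.card_fin] at h
  omega

lemma pathArc_le_cycleArc (n : ℕ) (u v : Fin n) (h : pathArc n u v) : cycleArc n u v := by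
  have := v.2
  simp only [pathArc, cycleArc] at *
  rw [h, Nat.mod_eq_of_lt this]

lemma path_lower (n : ℕ) (hn : 1 ≤ n) (S : Finset (Fin n)) (hS : SODS (pathArc n) S) :
    (3 * n + 4) / 5 ≤ S.card := by
  by_cases h3 : 3 ≤ n
  · exact cycle_lower n h3 S (hS.mono (pathArc_le_cycleArc n))
  -- The initial vertex has no in-neighbor, so it lies in every out-dominating set.
  have h0 : ∀ T : Finset (Fin n), OutDom (pathArc n) T → (⟨0, hn⟩ : Fin n) ∈ T := by
    intro T hT
    by_contra h
    obtain ⟨u, _, hu⟩ := hT _ h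
    simp [pathArc] at hu
  -- For `n ≤ 2` no vertex is missing: a missing `v` has only the initial vertex as a neighbor,
  -- which cannot be moved.
  have hall : S = univ := by
    rw [eq_univ_iff_forall]
    intro v
    by_contra hv
    have hv0 : (v : ℕ) ≠ 0 := fun h => hv (by
      have := h0 S hS.1
      rwa [show v = ⟨0, hn⟩ from Fin.ext h])
    obtain ⟨u, hu, huv, hd⟩ := hS.2 v hv
    have h := h0 _ hd
    have := u.2
    have := v.2
    simp only [pathArc] at huv
    simp only [mem_insert, mem_erase, Fin.ext_iff, ne_eq] at h
    omega
  rw [hall, card_univ, Fintype.card_fin]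
  omega

lemma ceil_eq (n : ℕ) : ⌈(3 * (n : ℚ)) / 5⌉₊ = (3 * n + 4) / 5 := by
  apply eq_of_forall_ge_iff
  intro c
  rw [Nat.ceil_le, div_le_iff₀ (by norm_num)]
  have : 3 * (n : ℚ) ≤ c * 5 ↔ 3 * n ≤ c * 5 := by exact_mod_cast Iff.rfl
  rw [this]
  omega

lemma gammaSO_eq [Fintype V] [DecidableEq V] {A : V → V → Prop} {k : ℕ}
    (hlow : ∀ S, SODS A S → k ≤ S.card) (T : Finset V) (hT : SODS A T) (hc : T.card ≤ k) :
    gammaSO A = k := by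
  apply le_antisymm
  · have h : gammaSO A ≤ T.card := Nat.sInf_le ⟨T, hT, rfl⟩
    exact h.trans hc
  · refine le_csInf ⟨_, T, hT, rfl⟩ ?_
    rintro _ ⟨S, hS, rfl⟩
    exact hlow S hS

/-- `γ_so(P_n) = ⌈3n/5⌉` for `n ≥ 1`, and `γ_so(C_n) = ⌈3n/5⌉` for `n ≥ 3`. -/
theorem stmt_19 (n : ℕ) :
    (1 ≤ n → gammaSO (pathArc n) = ⌈(3 * (n : ℚ)) / 5⌉₊) ∧
    (3 ≤ n → gammaSO (cycleArc n) = ⌈(3 * (n : ℚ)) / 5⌉₊) := by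
  rw [ceil_eq]
  exact ⟨fun hn => gammaSO_eq (path_lower n hn) _ (witness_sods n) (witness_card n),
    fun hn => gammaSO_eq (cycle_lower n hn) _
      ((witness_sods n).mono (pathArc_le_cycleArc n)) (witness_card n)⟩
end
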